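/- If G is algorithmically stackable over A, then the word problem for G over A is decidable: the predicate on List A given by (fun w => π(w) = 1) is a computable predicate (ComputablePred). -/

import Mathlib

namespace Stk

variable {G : Type*} [Group G] {A : Type*}

/-- Evaluation of a word over the generating alphabet in the group. -/
def eval (ρ : A → G) (w : List A) : G := (w.map ρ).prod

/-- `C` is a set of normal forms: evaluation restricted to `C` is a bijection onto `G`. -/
def IsNormalFormSet (ρ : A → G) (C : Set (List A)) : Prop :=
  ∀ g : G, ∃! w : List A, w ∈ C ∧ eval ρ w = g

/-- The directed edge `(g, a)` of the Cayley graph is degenerate with respect to `C`. -/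
def IsDegenerate (ρ : A → G) (ι : A → A) (C : Set (List A)) (e : G × A) : Prop :=
  ∃ y₁ y₂ : List A, y₁ ∈ C ∧ eval ρ y₁ = e.1 ∧ y₂ ∈ C ∧ eval ρ y₂ = e.1 * ρ e.2 ∧
    (y₁ ++ [e.2] = y₂ ∨ y₁ = y₂ ++ [ι e.2])

/-- A non-degenerate edge is recursive. -/
def IsRecursive (ρ : A → G) (ι : A → A) (C : Set (List A)) (e : G × A) : Prop :=
  ¬ IsDegenerate ρ ι C e

/-- `e` is one of the edges along the path starting at `g` labeled by the word `w`. -/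
def EdgeOnPath (ρ : A → G) (g : G) (w : List A) (e : G × A) : Prop :=
  ∃ i : Fin w.length, e = (g * eval ρ (w.take i), w.get i)

/-- A stackable structure for `(G, A)`: a normal form set `C` containing the empty word,
a well-founded strict partial order `lt` on the recursive edges, and a constant `k`,
such that each edge `(g, a)` admits a word of length at most `k` evaluating to `ρ a`,
each of whose edges along the path from `g` is degenerate or recursive and `lt`-below
`(g, a)`. -/
def IsStackableStructure (ρ : A → G) (ι : A → A) (C : Set (List A))
    (lt : G × A → G × A → Prop) (k : ℕ) : Prop :=
  ([] : List A) ∈ C ∧ IsNormalFormSet ρ C ∧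
  (∀ e e' : G × A, lt e e' → IsRecursive ρ ι C e ∧ IsRecursive ρ ι C e') ∧
  Transitive lt ∧ WellFounded lt ∧
  ∀ g : G, ∀ a : A, ∃ w : List A, w.length ≤ k ∧ eval ρ w = ρ a ∧
    ∀ e' : G × A, EdgeOnPath ρ g w e' → IsDegenerate ρ ι C e' ∨ lt e' (g, a)

/-- The pair `(G, A)` is stackable. -/
def IsStackable (ρ : A → G) (ι : A → A) : Prop :=
  ∃ (C : Set (List A)) (lt : G × A → G × A → Prop) (k : ℕ),
    IsStackableStructure ρ ι C lt k

/-- A stacking map for a stackable structure. -/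
def IsStackingMap (ρ : A → G) (ι : A → A) (C : Set (List A))
    (lt : G × A → G × A → Prop) (k : ℕ) (Φ : G × A → List A) : Prop :=
  ∀ e : G × A, IsRecursive ρ ι C e →
    eval ρ (Φ e) = ρ e.2 ∧ (Φ e).length ≤ k ∧
    ∀ e' : G × A, EdgeOnPath ρ e.1 (Φ e) e' → IsDegenerate ρ ι C e' ∨ lt e' e

/-- A stacking map extended by `Φ (g, a) = [a]` on degenerate edges. -/
def IsExtendedStackingMap (ρ : A → G) (ι : A → A) (C : Set (List A))
    (lt : G × A → G × A → Prop) (k : ℕ) (Φ : G × A → List A) : Prop :=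
  (∀ e : G × A, IsDegenerate ρ ι C e → Φ e = [e.2]) ∧ IsStackingMap ρ ι C lt k Φ

/-- A word is freely reduced if no letter is followed by its formal inverse. -/
def FreelyReduced (ι : A → A) (w : List A) : Prop :=
  List.Chain' (fun a b => b ≠ ι a) w


/-- The canonical `Primcodable` encoding of a finite type with decidable equality. -/
noncomputable instance (priority := 100) primcodableOfFintype {B : Type*} [Fintype B] [DecidableEq B] :
    Primcodable B :=
  Primcodable.ofEquiv (Fin (Fintype.card B)) (Fintype.equivFin B)

/-! Read a word letter by letter, keeping the normal form `y` of the part already read. If the next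
letter is the inverse of the last letter of `y`, cancel; if it labels a degenerate edge, append it;
otherwise replace it in the input by the value of the flow function. Well-founded induction on
edges shows that every letter is eventually absorbed. The procedure only consults the flow function
at edges issuing from a known word, so it is computable, and a word is trivial if and only if its
normal form is empty. -/

section Computability

variable {α β : Type*} [Primcodable α] [Primcodable β]

theorem computablePred_eq {f g : α → β} (hf : Computable f) (hg : Computable g) :
    ComputablePred fun a => f a = g a := by
  classical
  exact Computable.computablePred ((Primrec.eq (α := β)).decide.to_comp.comp hf hg)

theorem computable_ite {c : α → Prop} [DecidablePred c] {f g : α → β} (hc : ComputablePred c)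
    (hf : Computable f) (hg : Computable g) : Computable fun a => if c a then f a else g a := by
  simpa only [Bool.cond_decide] using hc.decide.cond hf hg

theorem computablePred_comp {p : β → Prop} (hp : ComputablePred p) {f : α → β}
    (hf : Computable f) : ComputablePred fun a => p (f a) :=
  ComputablePred.computable_of_manyOneReducible ⟨f, hf, fun _ => Iff.rfl⟩ hp

theorem computable_of_computablePred_graph {f : α → β}
    (hf : ComputablePred fun x : α × β => x.2 = f x.1) : Computable f := by
  classical
  let guess (a : α) (n : ℕ) : Option β :=
    (Encodable.decode n).bind fun b => if b = f a then some b else none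
  have guess_computable : Computable₂ guess :=
    Computable.bind_decode_iff.2
      (computable_ite hf (Computable.option_some.comp Computable.snd) (Computable.const none))
  have eq_of_mem_guess (a : α) (n : ℕ) (b : β) (hb : b ∈ guess a n) : b = f a := by
    obtain ⟨c, -, hc⟩ := Option.bind_eq_some_iff.1 hb
    split_ifs at hc with hcf
    rwa [← Option.some.inj hc]
  refine (Partrec.rfindOpt guess_computable).of_eq_tot fun a => ?_
  have search_dom : (Nat.rfindOpt (guess a)).Dom :=
    Nat.rfindOpt_dom.2 ⟨Encodable.encode (f a), f a, by simp [guess]⟩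
  obtain ⟨n, hn⟩ := Nat.rfindOpt_spec (Part.get_mem search_dom)
  rw [← eq_of_mem_guess a n _ hn]
  exact Part.get_mem search_dom

theorem computable_dropLast : Computable (List.dropLast : List α → List α) :=
  (Computable.list_reverse.comp (Primrec.list_tail.to_comp.comp Computable.list_reverse)).of_eq
    fun l => by simp

theorem computable_getLast? : Computable (List.getLast? : List α → Option α) :=
  (Primrec.list_head?.to_comp.comp Computable.list_reverse).of_eq fun l => by simp

end Computability

theorem eval_nil (ρ : A → G) : eval ρ [] = 1 := rfl

theorem eval_append (ρ : A → G) (u v : List A) : eval ρ (u ++ v) = eval ρ u * eval ρ v := by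
  simp [eval]

theorem eval_singleton (ρ : A → G) (a : A) : eval ρ [a] = ρ a := by
  simp [eval]

theorem eval_cons (ρ : A → G) (a : A) (v : List A) : eval ρ (a :: v) = ρ a * eval ρ v := by
  simp [eval]

theorem edgeOnPath_cons_self (ρ : A → G) (g : G) (a : A) (v : List A) :
    EdgeOnPath ρ g (a :: v) (g, a) :=
  ⟨⟨0, by simp⟩, by simp [eval_nil]⟩

theorem EdgeOnPath.cons {ρ : A → G} {g : G} {a : A} {v : List A} {e : G × A}
    (he : EdgeOnPath ρ (g * ρ a) v e) : EdgeOnPath ρ g (a :: v) e := by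
  obtain ⟨i, rfl⟩ := he
  exact ⟨i.succ, by simp [eval_cons, mul_assoc]⟩

/-- `Φ` is a flow function for the normal form set `C`, in the sense of Brittenham, Hermiller and
Holt: an extended stacking map whose values need not be of bounded length. -/
structure IsFlowFunction (ρ : A → G) (ι : A → A) (C : Set (List A)) (lt : G × A → G × A → Prop)
    (Φ : G × A → List A) : Prop where
  nil_mem : [] ∈ C
  isNormalFormSet : IsNormalFormSet ρ C
  wellFounded : WellFounded lt
  eq_singleton : ∀ e, IsDegenerate ρ ι C e → Φ e = [e.2]
  eval_eq : ∀ e, IsRecursive ρ ι C e → eval ρ (Φ e) = ρ e.2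
  path : ∀ e, IsRecursive ρ ι C e → ∀ e', EdgeOnPath ρ e.1 (Φ e) e' →
    IsDegenerate ρ ι C e' ∨ lt e' e

theorem IsExtendedStackingMap.isFlowFunction {ρ : A → G} {ι : A → A} {C : Set (List A)}
    {lt : G × A → G × A → Prop} {k : ℕ} {Φ : G × A → List A}
    (hΦ : IsExtendedStackingMap ρ ι C lt k Φ) (hC : IsStackableStructure ρ ι C lt k) :
    IsFlowFunction ρ ι C lt Φ where
  nil_mem := hC.1
  isNormalFormSet := hC.2.1
  wellFounded := hC.2.2.2.2.1
  eq_singleton := hΦ.1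
  eval_eq e he := (hΦ.2 e he).1
  path e he := (hΦ.2 e he).2.2

theorem IsFlowFunction.isDegenerate_of_eq_singleton {ρ : A → G} {ι : A → A} {C : Set (List A)}
    {lt : G × A → G × A → Prop} {Φ : G × A → List A} (hΦ : IsFlowFunction ρ ι C lt Φ)
    {e : G × A} (he : Φ e = [e.2]) : IsDegenerate ρ ι C e := by
  by_contra hrec
  have he_path : EdgeOnPath ρ e.1 (Φ e) e := he ▸ edgeOnPath_cons_self ρ e.1 e.2 []
  rcases hΦ.path e hrec e he_path with hdeg | hlt
  · exact hrec hdeg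
  · exact hΦ.wellFounded.irrefl.irrefl e hlt

/-- The words all of whose prefixes, including the word itself, lie in `C`. Normal forms of a
stackable structure are automatically of this kind, but this only follows from the termination of
the normal form procedure, so it is carried along as an invariant. -/
def IsHereditary (C : Set (List A)) (y : List A) : Prop :=
  ∀ p, p <+: y → p ∈ C

namespace IsHereditary

variable {C : Set (List A)} {y : List A}

theorem mem (hy : IsHereditary C y) : y ∈ C :=
  hy y List.prefix_rfl

theorem nil (hC : [] ∈ C) : IsHereditary C [] := by
  intro p hp
  rwa [List.prefix_nil.1 hp]

theorem dropLast (hy : IsHereditary C y) : IsHereditary C y.dropLast :=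
  fun p hp => hy p (hp.trans (List.dropLast_prefix y))

theorem concat (hy : IsHereditary C y) {a : A} (hya : y ++ [a] ∈ C) :
    IsHereditary C (y ++ [a]) := by
  intro p hp
  rcases List.prefix_concat_iff.1 hp with rfl | hp
  · exact hya
  · exact hy p hp

end IsHereditary

theorem IsNormalFormSet.concat_mem {ρ : A → G} {ι : A → A} {C : Set (List A)}
    (hC : IsNormalFormSet ρ C) {y : List A} (hy : y ∈ C) {a : A}
    (hdeg : IsDegenerate ρ ι C (eval ρ y, a)) (hlast : y.getLast? ≠ some (ι a)) :
    y ++ [a] ∈ C := by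
  obtain ⟨y₁, y₂, hy₁, hy₁_eval, hy₂, -, hor⟩ := hdeg
  obtain rfl : y₁ = y := (hC (eval ρ y)).unique ⟨hy₁, hy₁_eval⟩ ⟨hy, rfl⟩
  rcases hor with hconcat | hcancel
  · rwa [hconcat]
  · exact absurd (List.getLast?_eq_some_iff.2 ⟨y₂, hcancel⟩) hlast

section NormalFormProcedure

variable [DecidableEq A]

/-- One step of the normal form procedure. The state `(y, v)` consists of the normal form `y` of the
part of the input already read and of the part `v` still to be read; `F y a` is the replacement for
the letter `a` read after `y`. The procedure halts with output `y` when `v` is empty. -/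
def step (ι : A → A) (F : List A → A → List A) : List A × List A → List A ⊕ List A × List A
  | (y, []) => .inl y
  | (y, a :: v) => .inr <|
    if y.getLast? = some (ι a) then (y.dropLast, v)
    else if F y a = [a] then (y ++ [a], v)
    else (y, F y a ++ v)

/-- The partial function computed by the normal form procedure, obtained by iterating `step`. -/
def normalize (ι : A → A) (F : List A → A → List A) : List A × List A →. List A :=
  PFun.fix fun s => Part.some (step ι F s)

theorem computable_step [Primcodable A] {ι : A → A} (hι : Computable ι)
    {F : List A → A → List A} (hF : Computable₂ F) : Computable (step ι F) := by
  have y_comp : Computable fun x : (List A × List A) × A => x.1.1 :=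
    Computable.fst.comp Computable.fst
  have tail_comp : Computable fun x : (List A × List A) × A => x.1.2.tail :=
    Primrec.list_tail.to_comp.comp (Computable.snd.comp Computable.fst)
  have F_comp : Computable fun x : (List A × List A) × A => F x.1.1 x.2 :=
    hF.comp y_comp Computable.snd
  have cancel_pred : ComputablePred fun x : (List A × List A) × A =>
      x.1.1.getLast? = some (ι x.2) :=
    computablePred_eq (computable_getLast?.comp y_comp)
      (Computable.option_some.comp (hι.comp Computable.snd))
  have append_pred : ComputablePred fun x : (List A × List A) × A => F x.1.1 x.2 = [x.2] :=
    computablePred_eq F_comp (Computable.list_cons.comp Computable.snd (Computable.const []))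
  have next_comp : Computable₂ fun (s : List A × List A) (a : A) =>
      if s.1.getLast? = some (ι a) then (s.1.dropLast, s.2.tail)
      else if F s.1 a = [a] then (s.1 ++ [a], s.2.tail)
      else (s.1, F s.1 a ++ s.2.tail) :=
    computable_ite cancel_pred ((computable_dropLast.comp y_comp).pair tail_comp)
      (computable_ite append_pred
        ((Computable.list_concat.comp y_comp Computable.snd).pair tail_comp)
        (y_comp.pair (Computable.list_append.comp F_comp tail_comp)))
  refine (Computable.option_casesOn (Primrec.list_head?.to_comp.comp Computable.snd)
    (Computable.sumInl.comp Computable.fst) (Computable.sumInr.comp₂ next_comp)).of_eq ?_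
  rintro ⟨y, _ | ⟨a, v⟩⟩ <;> rfl

theorem partrec_normalize [Primcodable A] {ι : A → A} (hι : Computable ι)
    {F : List A → A → List A} (hF : Computable₂ F) : Partrec (normalize ι F) :=
  Partrec.fix (computable_step hι hF)

variable {ι : A → A} {F : List A → A → List A}

theorem normalize_nil (y : List A) : normalize ι F (y, []) = Part.some y :=
  Part.eq_some_iff.2 (PFun.fix_stop (Part.mem_some _))

theorem normalize_eq_of_step_eq_inr {s t : List A × List A} (h : step ι F s = .inr t) :
    normalize ι F s = normalize ι F t :=
  PFun.fix_fwd_eq (Part.mem_some_iff.2 h.symm)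

/-- After having computed the normal form `y`, the normal form procedure reads the prefix `u` of
any remaining input and ends up with the normal form of `y ++ u`. -/
def Absorbs (ρ : A → G) (ι : A → A) (C : Set (List A)) (F : List A → A → List A)
    (y u : List A) : Prop :=
  ∃ y', IsHereditary C y' ∧ eval ρ y' = eval ρ y * eval ρ u ∧
    ∀ v, normalize ι F (y, u ++ v) = normalize ι F (y', v)

variable {ρ : A → G} {C : Set (List A)} {y : List A} {a : A}

theorem absorbs_nil (hy : IsHereditary C y) : Absorbs ρ ι C F y [] :=
  ⟨y, hy, by simp [eval_nil], fun _ => rfl⟩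

theorem absorbs_of_getLast?_eq (hρι : ∀ a, ρ (ι a) = (ρ a)⁻¹) (hy : IsHereditary C y)
    (hlast : y.getLast? = some (ι a)) : Absorbs ρ ι C F y [a] := by
  refine ⟨y.dropLast, hy.dropLast, ?_, fun v => normalize_eq_of_step_eq_inr (by simp [step, hlast])⟩
  obtain ⟨z, rfl⟩ := List.getLast?_eq_some_iff.1 hlast
  simp [eval_append, eval_singleton, hρι]

theorem absorbs_of_eq_singleton (hy : IsHereditary C (y ++ [a]))
    (hlast : y.getLast? ≠ some (ι a)) (hF : F y a = [a]) : Absorbs ρ ι C F y [a] :=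
  ⟨y ++ [a], hy, eval_append ρ y [a],
    fun v => normalize_eq_of_step_eq_inr (by simp [step, hlast, hF])⟩

theorem Absorbs.of_replacement (hlast : y.getLast? ≠ some (ι a)) (hF : F y a ≠ [a])
    (hF_eval : eval ρ (F y a) = ρ a) (h : Absorbs ρ ι C F y (F y a)) :
    Absorbs ρ ι C F y [a] := by
  obtain ⟨y', hy', hy'_eval, hnorm⟩ := h
  refine ⟨y', hy', by rw [hy'_eval, hF_eval, eval_singleton], fun v => ?_⟩
  rw [← hnorm v]
  exact normalize_eq_of_step_eq_inr (by simp [step, hlast, hF])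

theorem absorbs_of_forall_edgeOnPath {u : List A} (hy : IsHereditary C y)
    (h : ∀ e, EdgeOnPath ρ (eval ρ y) u e →
      ∀ z, IsHereditary C z → eval ρ z = e.1 → Absorbs ρ ι C F z [e.2]) :
    Absorbs ρ ι C F y u := by
  induction u generalizing y with
  | nil => exact absorbs_nil hy
  | cons a u ih =>
    obtain ⟨y₁, hy₁, hy₁_eval, hnorm₁⟩ := h _ (edgeOnPath_cons_self ρ _ a u) y hy rfl
    rw [eval_singleton] at hy₁_eval
    obtain ⟨y₂, hy₂, hy₂_eval, hnorm₂⟩ := ih hy₁ fun e he => h e (hy₁_eval ▸ he).cons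
    refine ⟨y₂, hy₂, by rw [hy₂_eval, hy₁_eval, eval_cons, mul_assoc], fun v => ?_⟩
    exact (hnorm₁ (u ++ v)).trans (hnorm₂ v)

end NormalFormProcedure

namespace IsFlowFunction

variable {ρ : A → G} {ι : A → A} {C : Set (List A)} {lt : G × A → G × A → Prop}
  {Φ : G × A → List A}

theorem absorbs_of_isDegenerate [DecidableEq A] (hΦ : IsFlowFunction ρ ι C lt Φ)
    (hρι : ∀ a, ρ (ι a) = (ρ a)⁻¹) {y : List A} (hy : IsHereditary C y) {a : A}
    (hdeg : IsDegenerate ρ ι C (eval ρ y, a)) :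
    Absorbs ρ ι C (fun y a => Φ (eval ρ y, a)) y [a] := by
  by_cases hlast : y.getLast? = some (ι a)
  · exact absorbs_of_getLast?_eq hρι hy hlast
  · have hya : y ++ [a] ∈ C := hΦ.isNormalFormSet.concat_mem hy.mem hdeg hlast
    exact absorbs_of_eq_singleton (hy.concat hya) hlast (hΦ.eq_singleton _ hdeg)

theorem absorbs_letter [DecidableEq A] (hΦ : IsFlowFunction ρ ι C lt Φ)
    (hρι : ∀ a, ρ (ι a) = (ρ a)⁻¹) (e : G × A) (y : List A) (hy : IsHereditary C y)
    (hy_eval : eval ρ y = e.1) :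
    Absorbs ρ ι C (fun y a => Φ (eval ρ y, a)) y [e.2] := by
  induction e using hΦ.wellFounded.induction generalizing y with
  | _ e ih =>
    obtain ⟨g, a⟩ := e
    obtain rfl : eval ρ y = g := hy_eval
    by_cases hdeg : IsDegenerate ρ ι C (eval ρ y, a)
    · exact hΦ.absorbs_of_isDegenerate hρι hy hdeg
    by_cases hlast : y.getLast? = some (ι a)
    · exact absorbs_of_getLast?_eq hρι hy hlast
    refine .of_replacement hlast (fun h => hdeg (hΦ.isDegenerate_of_eq_singleton h))
      (hΦ.eval_eq _ hdeg) (absorbs_of_forall_edgeOnPath hy ?_)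
    rintro ⟨g', b⟩ he z hz hz_eval
    rcases hΦ.path _ hdeg _ he with hdeg' | hlt
    · obtain rfl : eval ρ z = g' := hz_eval
      exact hΦ.absorbs_of_isDegenerate hρι hz hdeg'
    · exact ih _ hlt z hz hz_eval

theorem exists_normalize_eq_some [DecidableEq A] (hΦ : IsFlowFunction ρ ι C lt Φ)
    (hρι : ∀ a, ρ (ι a) = (ρ a)⁻¹) (w : List A) :
    ∃ y ∈ C, eval ρ y = eval ρ w ∧
      normalize ι (fun y a => Φ (eval ρ y, a)) ([], w) = Part.some y := by
  obtain ⟨y, hy, hy_eval, hnorm⟩ :=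
    absorbs_of_forall_edgeOnPath (.nil hΦ.nil_mem) (u := w) fun e _ => hΦ.absorbs_letter hρι e
  refine ⟨y, hy.mem, by rw [hy_eval, eval_nil, one_mul], ?_⟩
  simpa only [List.append_nil, normalize_nil] using hnorm []

theorem exists_computable_normalForm [Primcodable A] (hΦ : IsFlowFunction ρ ι C lt Φ)
    (hι : Computable ι) (hρι : ∀ a, ρ (ι a) = (ρ a)⁻¹)
    (hΦ_comp : Computable₂ fun (y : List A) a => Φ (eval ρ y, a)) :
    ∃ N : List A → List A, Computable N ∧ ∀ w, N w ∈ C ∧ eval ρ (N w) = eval ρ w := by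
  classical
  choose N hN_mem hN_eval hN_norm using hΦ.exists_normalize_eq_some hρι
  refine ⟨N, ?_, fun w => ⟨hN_mem w, hN_eval w⟩⟩
  have input_comp : Computable fun w : List A => (([] : List A), w) :=
    (Computable.const []).pair Computable.id
  exact ((partrec_normalize hι hΦ_comp).comp input_comp).of_eq_tot
    fun w => Part.eq_some_iff.1 (hN_norm w)

end IsFlowFunction

theorem IsNormalFormSet.eval_eq_one_iff {ρ : A → G} {C : Set (List A)}
    (hC : IsNormalFormSet ρ C) (hnil : [] ∈ C) {y : List A} (hy : y ∈ C) :
    eval ρ y = 1 ↔ y = [] := by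
  refine ⟨fun h => (hC 1).unique ⟨hy, h⟩ ⟨hnil, rfl⟩, ?_⟩
  rintro rfl
  exact eval_nil ρ

theorem wordProblem_computable_of_algorithmically_stackable_general [Primcodable A]
    {ρ : A → G} {ι : A → A} (hι : Computable ι) (hρι : ∀ a, ρ (ι a) = (ρ a)⁻¹)
    {C : Set (List A)} {lt : G × A → G × A → Prop} {Φ : G × A → List A}
    (hΦ : IsFlowFunction ρ ι C lt Φ)
    (hS : ComputablePred fun x : List A × A × List A => x.2.2 = Φ (eval ρ x.1, x.2.1)) :
    ComputablePred fun w : List A => eval ρ w = 1 := by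
  have reassoc : Computable fun x : (List A × A) × List A => (x.1.1, x.1.2, x.2) :=
    (Computable.fst.comp Computable.fst).pair
      ((Computable.snd.comp Computable.fst).pair Computable.snd)
  have Φ_comp : Computable₂ fun (y : List A) a => Φ (eval ρ y, a) :=
    computable_of_computablePred_graph (computablePred_comp hS reassoc)
  obtain ⟨N, N_comp, hN⟩ := hΦ.exists_computable_normalForm hι hρι Φ_comp
  refine (computablePred_eq N_comp (Computable.const [])).of_eq fun w => ?_
  rw [← (hN w).2, hΦ.isNormalFormSet.eval_eq_one_iff hΦ.nil_mem (hN w).1]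

/-- an algorithmically stackable group has decidable word problem. -/
theorem wordProblem_computable_of_algorithmically_stackable {G : Type*} [Group G]
    {A : Type*} [Fintype A] [DecidableEq A]
    (ρ : A → G) (ι : A → A)
    (hgen : Subgroup.closure (Set.range ρ) = ⊤)
    (hne : ∀ a : A, ρ a ≠ 1)
    (hinv : Function.Involutive ι)
    (hρι : ∀ a : A, ρ (ι a) = (ρ a)⁻¹)
    (C : Set (List A)) (lt : G × A → G × A → Prop) (k : ℕ)
    (hstk : IsStackableStructure ρ ι C lt k)
    (Φ : G × A → List A) (hΦ : IsExtendedStackingMap ρ ι C lt k Φ)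
    (hS : ComputablePred (fun x : List A × A × List A => x.2.2 = Φ (eval ρ x.1, x.2.1))) :
    ComputablePred (fun w : List A => eval ρ w = 1) := by
  exact wordProblem_computable_of_algorithmically_stackable_general (Primrec.dom_finite ι).to_comp
    hρι (hΦ.isFlowFunction hstk) hS

end Stk
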